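/- arXiv:1206.0895 — 2 statements merged into one kernel-verified Lean document; each statement's English description precedes it below -/
import Mathlib

section
/- Let m be a (local or global) minimum of G of type k and strength λ, and suppose ν has a finite second moment. Then for μ-almost every realization h and every α with 1 − 1/(2(2k−1)) < α < 1: for every s ∈ ℝ, n^{2k(1−α)} ( G_n^h(m + s n^{α−1}) − G_n^h(m) ) → λ s^{2k}/(2k)! as n → ∞, and this convergence is uniform on compact subsets of ℝ. -/
open MeasureTheory ProbabilityTheory Real Filter Topology
open scoped ENNReal NNReal

noncomputable section

/-- The value of a spin encoded as a Boolean. -/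
def spin (b : Bool) : ℝ := if b then 1 else -1

/-- Total magnetization of a configuration. -/
def mag {n : ℕ} (σ : Fin n → Bool) : ℝ := ∑ i, spin (σ i)

/-- Gibbs weight of a configuration in the random field Curie-Weiss model. -/
def gibbsWeight (β : ℝ) (h : ℕ → ℝ) (n : ℕ) (σ : Fin n → Bool) : ℝ :=
  Real.exp (β / (2 * n) * (mag σ) ^ 2 + β * ∑ i : Fin n, h i * spin (σ i))

/-- The random field Curie-Weiss Gibbs measure on configurations. -/
def gibbsMeasure (β : ℝ) (h : ℕ → ℝ) (n : ℕ) : Measure (Fin n → Bool) :=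
  (ENNReal.ofReal (∑ σ : Fin n → Bool, gibbsWeight β h n σ))⁻¹ •
    ∑ σ : Fin n → Bool, ENNReal.ofReal (gibbsWeight β h n σ) • Measure.dirac σ

/-- `μ` is the infinite product of `ν` over `ℕ` (characterised by finite marginals). -/
def IsProductMeasure (ν : Measure ℝ) (μ : Measure (ℕ → ℝ)) : Prop :=
  ∀ n : ℕ, μ.map (fun h (i : Fin n) => h (i : ℕ)) = Measure.pi fun _ : Fin n => ν

/-- extended logarithm, `elog 0 = ⊥`, `elog ⊤ = ⊤`. -/
def elog (x : ℝ≥0∞) : EReal :=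
  if x = 0 then ⊥ else if x = ⊤ then ⊤ else ((Real.log x.toReal : ℝ) : EReal)

/-- A sequence of measures satisfies a large deviations principle with given speed and
rate function. -/
def HasLDP (P : ℕ → Measure ℝ) (speed : ℕ → ℝ) (I : ℝ → ℝ≥0∞) : Prop :=
  LowerSemicontinuous I ∧ (∀ c : ℝ, IsCompact {x : ℝ | I x ≤ ENNReal.ofReal c}) ∧
    ∀ C : Set ℝ, MeasurableSet C →
      -(⨅ x ∈ interior C, (I x : EReal)) ≤
          liminf (fun n => ((((speed n)⁻¹ : ℝ) : EReal)) * elog (P n C)) atTop ∧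
        limsup (fun n => ((((speed n)⁻¹ : ℝ) : EReal)) * elog (P n C)) atTop ≤
          -(⨅ x ∈ closure C, (I x : EReal))

/-- The function `G` of the random field Curie-Weiss model. -/
def G (β : ℝ) (ν : Measure ℝ) (x : ℝ) : ℝ :=
  β / 2 * x ^ 2 - ∫ h, Real.log (Real.cosh (β * (x + h))) ∂ν

/-- The finite-volume function `G_n^h`. -/
def Gn (β : ℝ) (h : ℕ → ℝ) (n : ℕ) (x : ℝ) : ℝ :=
  β / 2 * x ^ 2 - (1 / n) * ∑ i : Fin n, Real.log (Real.cosh (β * (x + h i)))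

/-- `m` is a (local or global) minimum of `G` of type `k` and strength `l`. -/
def IsMinOfType (β : ℝ) (ν : Measure ℝ) (m : ℝ) (k : ℕ) (l : ℝ) : Prop :=
  1 ≤ k ∧ 0 < l ∧ (∀ i : ℕ, 1 ≤ i → i ≤ 2 * k - 1 → iteratedDeriv i (G β ν) m = 0) ∧
    iteratedDeriv (2 * k) (G β ν) m = l

/-- The height of a minimum `m` of `G`. -/
def height (β : ℝ) (ν : Measure ℝ) (m : ℝ) : ℝ := G β ν m - ⨅ w, G β ν w

/-- The broadness of a minimum `m` of `G`. -/
def broadness (β : ℝ) (ν : Measure ℝ) (m : ℝ) : ℝ :=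
  sInf ((fun y => |y - m|) '' {y | G β ν y < G β ν m})

/-- The moderate deviations rate function. -/
def mdpRate (β l : ℝ) (k : ℕ) (x : ℝ) : ℝ≥0∞ :=
  if k = 1 then ENNReal.ofReal (x ^ 2 / (2 * (l⁻¹ - β⁻¹)))
  else ENNReal.ofReal (l * x ^ (2 * k) / (Nat.factorial (2 * k)))

/-- The polynomial `P_{2k}`. -/
def P2k (l : ℝ) (k : ℕ) (s : ℝ) : ℝ :=
  l / (2 * (Nat.factorial (2 * k))) * s ^ (2 * k) - ∑ i ∈ Finset.Icc 1 (2 * k - 1), |s| ^ i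

/-!
Since `G_n^h` is the function `G` of the empirical measure of `h`, the statement is a law of large
numbers for the Taylor coefficients of `G` at `m`. Every derivative of `log cosh` is a polynomial in
`tanh`, hence bounded, so Hoeffding's inequality and Borel–Cantelli give almost surely
`n ^ γ * ((G_n^h)^{(j)}(m) - G^{(j)}(m)) → 0` for all `j ≥ 1` and `γ < 1 / 2`.

If the first nonvanishing derivative of `G` at `m` is the `p`-th, then on the scale
`r = n ^ (1 - α)` the `j`-th Taylor term of `r ^ p * (G_n^h (m + s / r) - G_n^h m)` carries the
factor `r ^ (p - j)`, which is at most `r ^ (p - 1) = n ^ ((p - 1) * (1 - α))`. The condition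
`(p - 1) * (1 - α) < 1 / 2` is what kills the terms `1 ≤ j < p`; the `p`-th term survives, and the
Taylor remainder is of order `1 / r`.
-/

open scoped ContDiff

section Taylor

variable {f : ℝ → ℝ} {p : ℕ} {C : ℝ}

lemma abs_sub_taylor_le (hf : ContDiff ℝ (p + 1) f)
    (hC : ∀ y, |iteratedDeriv (p + 1) f y| ≤ C) (x t : ℝ) :
    |f (x + t) - ∑ j ∈ Finset.range (p + 1), iteratedDeriv j f x * t ^ j / j.factorial| ≤
      C * |t| ^ (p + 1) / (p + 1).factorial := by
  rcases eq_or_ne t 0 with rfl | ht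
  · simp [Finset.sum_range_succ']
  have hne : x ≠ x + t := by simpa using ht
  obtain ⟨ξ, -, hξ⟩ := taylor_mean_remainder_lagrange_iteratedDeriv hne hf.contDiffOn
  have htaylor : taylorWithinEval f p (Set.uIcc x (x + t)) x (x + t) =
      ∑ j ∈ Finset.range (p + 1), iteratedDeriv j f x * t ^ j / j.factorial := by
    rw [taylor_within_apply]
    refine Finset.sum_congr rfl fun j hj ↦ ?_
    have hjp : (j : ℕ∞ω) ≤ p + 1 := by
      exact_mod_cast (Finset.mem_range.1 hj).le
    rw [iteratedDerivWithin_eq_iteratedDeriv (uniqueDiffOn_uIcc hne)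
      (hf.of_le hjp).contDiffAt Set.left_mem_uIcc, add_sub_cancel_left, smul_eq_mul]
    ring
  rw [← htaylor, hξ, add_sub_cancel_left, abs_div, abs_mul, abs_pow, Nat.abs_cast]
  gcongr
  exact hC ξ

lemma abs_rescaled_increment_sub_le (hf : ContDiff ℝ (p + 1) f)
    (hC : ∀ y, |iteratedDeriv (p + 1) f y| ≤ C) (c : ℕ → ℝ) (x s : ℝ) {r : ℝ} (hr : 0 < r) :
    |r ^ p * (f (x + s / r) - f x) - ∑ j ∈ Finset.Icc 1 p, c j * s ^ j / j.factorial| ≤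
      ∑ j ∈ Finset.Icc 1 p, |r ^ (p - j) * iteratedDeriv j f x - c j| * |s| ^ j +
        C * |s| ^ (p + 1) * r⁻¹ := by
  have hC₀ : 0 ≤ C := (abs_nonneg _).trans (hC x)
  set R := f (x + s / r) -
    ∑ j ∈ Finset.range (p + 1), iteratedDeriv j f x * (s / r) ^ j / j.factorial with hR
  have hremainder : |r ^ p * R| ≤ C * |s| ^ (p + 1) * r⁻¹ := calc
    |r ^ p * R| ≤ r ^ p * (C * |s / r| ^ (p + 1) / (p + 1).factorial) := by
      rw [abs_mul, abs_of_pos (pow_pos hr p)]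
      gcongr
      exact abs_sub_taylor_le hf hC x (s / r)
    _ ≤ r ^ p * (C * |s / r| ^ (p + 1)) := by
      gcongr
      exact div_le_self (by positivity) (by exact_mod_cast (p + 1).factorial_pos)
    _ = C * |s| ^ (p + 1) * r⁻¹ := by
      rw [abs_div, abs_of_pos hr, div_pow]
      field_simp
      ring
  have hterm : ∀ j ∈ Finset.Icc 1 p,
      |r ^ p * (iteratedDeriv j f x * (s / r) ^ j / j.factorial) - c j * s ^ j / j.factorial| ≤
        |r ^ (p - j) * iteratedDeriv j f x - c j| * |s| ^ j := fun j hj ↦ by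
    have hfactor : r ^ p * (iteratedDeriv j f x * (s / r) ^ j / j.factorial) -
        c j * s ^ j / j.factorial =
          (r ^ (p - j) * iteratedDeriv j f x - c j) * s ^ j / j.factorial := by
      rw [← pow_sub_mul_pow r (Finset.mem_Icc.1 hj).2, div_pow]
      field_simp
    rw [hfactor, abs_div, abs_mul, abs_pow, Nat.abs_cast]
    exact div_le_self (by positivity) (by exact_mod_cast j.factorial_pos)
  have hsplit : r ^ p * (f (x + s / r) - f x) - ∑ j ∈ Finset.Icc 1 p, c j * s ^ j / j.factorial =
      ∑ j ∈ Finset.Icc 1 p, (r ^ p * (iteratedDeriv j f x * (s / r) ^ j / j.factorial) -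
        c j * s ^ j / j.factorial) + r ^ p * R := by
    rw [hR, Finset.sum_range_eq_add_Ico _ p.succ_pos, Nat.succ_eq_add_one,
      Finset.Ico_add_one_right_eq_Icc, Finset.sum_sub_distrib, ← Finset.mul_sum]
    simp only [iteratedDeriv_zero, pow_zero, mul_one, Nat.factorial_zero, Nat.cast_one, div_one]
    ring
  rw [hsplit]
  exact (abs_add_le _ _).trans
    (add_le_add ((Finset.abs_sum_le_sum_abs _ _).trans (Finset.sum_le_sum hterm)) hremainder)

lemma tendstoUniformlyOn_rescaled_increments {ι : Type*} {𝓁 : Filter ι} {F : ι → ℝ → ℝ}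
    {r : ι → ℝ} {c : ℕ → ℝ} {x : ℝ} (hF : ∀ n, ContDiff ℝ (p + 1) (F n))
    (hC : ∀ n y, |iteratedDeriv (p + 1) (F n) y| ≤ C) (hr : Tendsto r 𝓁 atTop)
    (hc : ∀ j ∈ Finset.Icc 1 p,
      Tendsto (fun n ↦ r n ^ (p - j) * iteratedDeriv j (F n) x) 𝓁 (𝓝 (c j)))
    {K : Set ℝ} (hK : Bornology.IsBounded K) :
    TendstoUniformlyOn (fun n s ↦ r n ^ p * (F n (x + s / r n) - F n x))
      (fun s ↦ ∑ j ∈ Finset.Icc 1 p, c j * s ^ j / j.factorial) 𝓁 K := by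
  obtain ⟨R, hR⟩ := hK.exists_norm_le
  have hbound : Tendsto (fun n ↦
      ∑ j ∈ Finset.Icc 1 p, |r n ^ (p - j) * iteratedDeriv j (F n) x - c j| * R ^ j +
        C * R ^ (p + 1) * (r n)⁻¹) 𝓁 (𝓝 0) := by
    have hsum := tendsto_finsetSum _ fun j hj ↦
      (tendsto_sub_nhds_zero_iff.2 (hc j hj)).abs.mul_const (R ^ j)
    simpa using hsum.add (hr.inv_tendsto_atTop.const_mul (C * R ^ (p + 1)))
  refine Metric.tendstoUniformlyOn_iff.2 fun ε hε ↦ ?_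
  filter_upwards [hbound.eventually_lt_const hε, hr.eventually_gt_atTop 0] with n hn hrn s hs
  have hsR : |s| ≤ R := hR s hs
  have hC₀ : 0 ≤ C := (abs_nonneg _).trans (hC n x)
  rw [dist_comm, Real.dist_eq]
  refine (abs_rescaled_increment_sub_le (hF n) (hC n) c x s hrn).trans_lt (lt_of_le_of_lt ?_ hn)
  gcongr

end Taylor

section TranslatedIntegral

lemma integrable_comp_of_lipschitzWith {X E F : Type*} [MeasurableSpace X] {μ : Measure X}
    [IsFiniteMeasure μ] [NormedAddCommGroup E] [NormedAddCommGroup F] {K : ℝ≥0} {f : E → F}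
    {g : X → E} (hf : LipschitzWith K f) (hg : Integrable g μ) :
    Integrable (fun a ↦ f (g a)) μ := by
  refine ((integrable_const ‖f 0‖).add (hg.norm.const_mul (K : ℝ))).mono'
    (hf.continuous.comp_aestronglyMeasurable hg.1) (ae_of_all _ fun a ↦ ?_)
  calc ‖f (g a)‖ ≤ ‖f 0‖ + ‖f (g a) - f 0‖ := norm_le_norm_add_norm_sub' _ _
    _ ≤ ‖f 0‖ + K * ‖g a‖ := by simpa using hf.norm_sub_le (g a) 0

variable {ν : Measure ℝ} [IsFiniteMeasure ν] {f : ℝ → ℝ} {C : ℝ}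

lemma integrable_comp_const_add_of_abs_deriv_le (hf : Differentiable ℝ f)
    (hC : ∀ y, |deriv f y| ≤ C) (hν : Integrable (fun y ↦ y) ν) (x : ℝ) :
    Integrable (fun y ↦ f (x + y)) ν :=
  integrable_comp_of_lipschitzWith (lipschitzWith_of_nnnorm_deriv_le hf
    fun y ↦ NNReal.coe_le_coe.1 ((hC y).trans C.le_coe_toNNReal)) ((integrable_const x).add hν)

lemma hasDerivAt_integral_comp_const_add (hf : Differentiable ℝ f)
    (hC : ∀ y, |deriv f y| ≤ C) (hν : Integrable (fun y ↦ y) ν) (x : ℝ) :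
    HasDerivAt (fun x ↦ ∫ y, f (x + y) ∂ν) (∫ y, deriv f (x + y) ∂ν) x :=
  (hasDerivAt_integral_of_dominated_loc_of_deriv_le (F := fun x y ↦ f (x + y))
    (F' := fun x y ↦ deriv f (x + y)) (bound := fun _ ↦ C) univ_mem
    (Eventually.of_forall fun x ↦
      (integrable_comp_const_add_of_abs_deriv_le hf hC hν x).aestronglyMeasurable)
    (integrable_comp_const_add_of_abs_deriv_le hf hC hν x)
    ((measurable_deriv f).comp (measurable_const_add x)).aestronglyMeasurable
    (ae_of_all _ fun _ _ _ ↦ hC _) (integrable_const C)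
    (ae_of_all _ fun y x _ ↦ HasDerivAt.comp_add_const x y (hf (x + y)).hasDerivAt)).2

variable (hf : ContDiff ℝ ∞ f) (hC : ∀ j, ∃ C, ∀ y, |iteratedDeriv (j + 1) f y| ≤ C)
  (hν : Integrable (fun y ↦ y) ν)

include hf hC hν

lemma hasDerivAt_integral_iteratedDeriv_comp_const_add (j : ℕ) (x : ℝ) :
    HasDerivAt (fun x ↦ ∫ y, iteratedDeriv j f (x + y) ∂ν)
      (∫ y, iteratedDeriv (j + 1) f (x + y) ∂ν) x := by
  obtain ⟨C, hC⟩ := hC j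
  rw [iteratedDeriv_succ] at hC ⊢
  exact hasDerivAt_integral_comp_const_add
    (hf.differentiable_iteratedDeriv j (by exact_mod_cast ENat.natCast_lt_top j)) hC hν x

lemma iteratedDeriv_integral_comp_const_add (j : ℕ) :
    iteratedDeriv j (fun x ↦ ∫ y, f (x + y) ∂ν) = fun x ↦ ∫ y, iteratedDeriv j f (x + y) ∂ν := by
  induction j with
  | zero => simp only [iteratedDeriv_zero]
  | succ j ih =>
    rw [iteratedDeriv_succ, ih]
    exact funext fun x ↦ (hasDerivAt_integral_iteratedDeriv_comp_const_add hf hC hν j x).deriv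

lemma contDiff_integral_comp_const_add : ContDiff ℝ ∞ (fun x ↦ ∫ y, f (x + y) ∂ν) :=
  contDiff_of_differentiable_iteratedDeriv fun j _ ↦ by
    rw [iteratedDeriv_integral_comp_const_add hf hC hν]
    exact fun x ↦
      (hasDerivAt_integral_iteratedDeriv_comp_const_add hf hC hν j x).differentiableAt

end TranslatedIntegral

section LogCosh

/-- The single-site potential `y ↦ log cosh (β y)`, so that
`G β ν x = β / 2 * x ^ 2 - ∫ h, logCosh β (x + h) ∂ν`. -/
def logCosh (β y : ℝ) : ℝ := log (cosh (β * y))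

lemma contDiff_log_cosh {n : ℕ∞ω} : ContDiff ℝ n fun y ↦ log (cosh y) :=
  contDiff_cosh.log fun y ↦ (cosh_pos y).ne'

lemma contDiff_logCosh (β : ℝ) {n : ℕ∞ω} : ContDiff ℝ n (logCosh β) :=
  contDiff_log_cosh.comp (contDiff_const.mul contDiff_id)

lemma hasDerivAt_tanh (y : ℝ) : HasDerivAt tanh (1 - tanh y ^ 2) y := by
  have hcosh : cosh y ≠ 0 := (cosh_pos y).ne'
  have hquot := (hasDerivAt_sinh y).div (hasDerivAt_cosh y) hcosh
  have htanh : sinh / cosh = tanh := funext fun z ↦ (tanh_eq_sinh_div_cosh z).symm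
  rw [htanh] at hquot
  refine hquot.congr_deriv ?_
  rw [tanh_eq_sinh_div_cosh]
  field_simp

lemma exists_iteratedDeriv_log_cosh_eq_eval_tanh (j : ℕ) :
    ∃ P : Polynomial ℝ, iteratedDeriv (j + 1) (fun y ↦ log (cosh y)) = fun y ↦ P.eval (tanh y) := by
  induction j with
  | zero =>
    refine ⟨.X, funext fun y ↦ ?_⟩
    rw [iteratedDeriv_one, ((hasDerivAt_cosh y).log (cosh_pos y).ne').deriv, Polynomial.eval_X,
      tanh_eq_sinh_div_cosh]
  | succ j ih =>
    obtain ⟨P, hP⟩ := ih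
    refine ⟨P.derivative * (1 - .X ^ 2), funext fun y ↦ ?_⟩
    have hderiv : HasDerivAt (fun y ↦ P.eval (tanh y))
        (P.derivative.eval (tanh y) * (1 - tanh y ^ 2)) y :=
      (P.hasDerivAt (tanh y)).comp y (hasDerivAt_tanh y)
    rw [iteratedDeriv_succ, hP, hderiv.deriv]
    simp

lemma exists_abs_iteratedDeriv_logCosh_le (β : ℝ) (j : ℕ) :
    ∃ C, ∀ y, |iteratedDeriv (j + 1) (logCosh β) y| ≤ C := by
  obtain ⟨P, hP⟩ := exists_iteratedDeriv_log_cosh_eq_eval_tanh j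
  obtain ⟨C, hC⟩ := (isCompact_Icc (a := (-1 : ℝ)) (b := 1)).exists_bound_of_continuousOn
    P.continuous.continuousOn
  refine ⟨|β ^ (j + 1)| * C, fun y ↦ ?_⟩
  have hscale : iteratedDeriv (j + 1) (logCosh β) y = β ^ (j + 1) * P.eval (tanh (β * y)) := by
    unfold logCosh
    rw [iteratedDeriv_comp_const_mul contDiff_log_cosh, hP]
  rw [hscale, abs_mul]
  gcongr
  exact hC _ ⟨(neg_one_lt_tanh _).le, (tanh_lt_one _).le⟩

end LogCosh

section FreeEnergy

variable {ν : Measure ℝ}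

lemma contDiff_G (β : ℝ) [IsFiniteMeasure ν] (hν : Integrable (fun y ↦ y) ν) :
    ContDiff ℝ ∞ (G β ν) :=
  (contDiff_const.mul (contDiff_id.pow 2)).sub (contDiff_integral_comp_const_add
    (contDiff_logCosh β) (exists_abs_iteratedDeriv_logCosh_le β) hν)

lemma iteratedDeriv_G (β : ℝ) [IsFiniteMeasure ν] (hν : Integrable (fun y ↦ y) ν) (j : ℕ) (x : ℝ) :
    iteratedDeriv j (G β ν) x =
      β / 2 * iteratedDeriv j (· ^ 2) x - ∫ y, iteratedDeriv j (logCosh β) (x + y) ∂ν := by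
  have hint := contDiff_integral_comp_const_add
    (contDiff_logCosh β) (exists_abs_iteratedDeriv_logCosh_le β) hν
  have hle : (j : ℕ∞ω) ≤ (∞ : ℕ∞ω) := by exact_mod_cast le_top
  have hsub := iteratedDeriv_sub (n := j) (x := x) (f := fun x : ℝ ↦ β / 2 * x ^ 2)
    (by fun_prop) (hint.of_le hle).contDiffAt
  rw [iteratedDeriv_const_mul_field, iteratedDeriv_integral_comp_const_add
    (contDiff_logCosh β) (exists_abs_iteratedDeriv_logCosh_le β) hν] at hsub
  exact hsub

lemma exists_abs_iteratedDeriv_G_le (β : ℝ) {j : ℕ} (hj : 2 ≤ j) :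
    ∃ C, ∀ (ν : Measure ℝ) [IsZeroOrProbabilityMeasure ν], Integrable (fun y ↦ y) ν →
      ∀ x, |iteratedDeriv j (G β ν) x| ≤ C := by
  obtain ⟨C, hC⟩ := exists_abs_iteratedDeriv_logCosh_le β (j - 1)
  rw [Nat.sub_add_cancel (by lia)] at hC
  have hC₀ : 0 ≤ C := (abs_nonneg _).trans (hC 0)
  refine ⟨|β / 2 * Nat.descFactorial 2 j| + C, fun ν _ hν x ↦ ?_⟩
  have hintegral : ‖∫ y, iteratedDeriv j (logCosh β) (x + y) ∂ν‖ ≤ C :=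
    (norm_integral_le_of_norm_le_const (ae_of_all _ fun y ↦ hC (x + y))).trans
      (mul_le_of_le_one_right hC₀ measureReal_le_one)
  rw [iteratedDeriv_G β hν, iteratedDeriv_pow, Nat.sub_eq_zero_of_le hj, pow_zero, mul_one]
  exact (abs_sub _ _).trans (add_le_add le_rfl hintegral)

end FreeEnergy

section EmpiricalMeasure

variable {E : Type*} [MeasurableSpace E]

/-- The empirical measure `n⁻¹ ∑ i < n, δ_{x i}` of the first `n` terms of a sequence. It is the
zero measure for `n = 0` and a probability measure otherwise. -/
def empiricalMeasure (x : ℕ → E) (n : ℕ) : Measure E :=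
  (n : ℝ≥0)⁻¹ • ∑ i ∈ Finset.range n, Measure.dirac (x i)

instance (x : ℕ → E) (n : ℕ) : IsZeroOrProbabilityMeasure (empiricalMeasure x n) := by
  rcases n.eq_zero_or_pos with rfl | hn
  · simpa [empiricalMeasure] using inferInstanceAs (IsZeroOrProbabilityMeasure (0 : Measure E))
  · have hn' : (n : ℝ≥0) ≠ 0 := by exact_mod_cast hn.ne'
    refine ⟨.inr ?_⟩
    simp only [empiricalMeasure, Measure.smul_apply, Measure.finsetSum_apply, measure_univ,
      Finset.sum_const, Finset.card_range, nsmul_eq_mul, mul_one]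
    rw [ENNReal.smul_def, smul_eq_mul, ← ENNReal.coe_natCast, ← ENNReal.coe_mul,
      inv_mul_cancel₀ hn', ENNReal.coe_one]

variable [MeasurableSingletonClass E] (φ : E → ℝ) (x : ℕ → E) (n : ℕ)

lemma integrable_empiricalMeasure : Integrable φ (empiricalMeasure x n) :=
  (integrable_finsetSum_measure.2 fun _ _ ↦ integrable_dirac enorm_lt_top).smul_measure_nnreal

lemma integral_empiricalMeasure :
    ∫ y, φ y ∂empiricalMeasure x n = (n : ℝ)⁻¹ * ∑ i ∈ Finset.range n, φ (x i) := by
  rw [empiricalMeasure, integral_smul_nnreal_measure,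
    integral_finsetSum_measure fun _ _ ↦ integrable_dirac enorm_lt_top]
  simp only [integral_dirac, NNReal.smul_def, smul_eq_mul, NNReal.coe_inv, NNReal.coe_natCast]

lemma Gn_eq_G_empiricalMeasure (β : ℝ) (h : ℕ → ℝ) (n : ℕ) :
    Gn β h n = G β (empiricalMeasure h n) := by
  ext x
  rw [Gn, G, integral_empiricalMeasure, one_div,
    Fin.sum_univ_eq_sum_range (fun i ↦ log (cosh (β * (x + h i))))]

end EmpiricalMeasure

section LawOfLargeNumbers

lemma tendsto_rpow_mul_inv_mul_of_isBigO_sqrt {S : ℕ → ℝ}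
    (hS : S =O[atTop] fun n : ℕ ↦ √(n * log n)) {γ : ℝ} (hγ : γ < 1 / 2) :
    Tendsto (fun n : ℕ ↦ (n : ℝ) ^ γ * ((n : ℝ)⁻¹ * S n)) atTop (𝓝 0) := by
  have hlog : Tendsto (fun n : ℕ ↦ √(log n / (n : ℝ) ^ (1 - 2 * γ))) atTop (𝓝 0) := by
    have := (isLittleO_log_rpow_atTop (r := 1 - 2 * γ) (by linarith)).tendsto_div_nhds_zero
    simpa using (this.comp tendsto_natCast_atTop_atTop).sqrt
  have hscale : ∀ᶠ n : ℕ in atTop, √(log n / (n : ℝ) ^ (1 - 2 * γ)) =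
      (n : ℝ) ^ γ * ((n : ℝ)⁻¹ * √(n * log n)) := by
    filter_upwards [eventually_gt_atTop 0] with n hn
    have hn' : (0 : ℝ) < n := by exact_mod_cast hn
    rw [← sq_eq_sq₀ (by positivity) (by positivity), mul_pow, mul_pow, sq_sqrt (by positivity),
      sq_sqrt (by positivity), rpow_sub hn', rpow_one, two_mul γ, rpow_add hn']
    field_simp
  exact ((Asymptotics.isBigO_refl _ _).mul ((Asymptotics.isBigO_refl _ _).mul hS)).trans_tendsto
    (hlog.congr' hscale)

variable {E : Type*} [MeasurableSpace E]

section Subgaussian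

variable {P : Measure E} {X : ℕ → E → ℝ} {c : ℝ≥0}

lemma measureReal_two_mul_sqrt_le_sum_le (hindep : iIndepFun X P)
    (hX : ∀ i, HasSubgaussianMGF (X i) c P) (hc : c ≠ 0) {n : ℕ} (hn : n ≠ 0) :
    P.real {a | 2 * √(c * (n * log n)) ≤ ∑ i ∈ Finset.range n, X i a} ≤ 1 / (n : ℝ) ^ 2 := by
  have hc' : (c : ℝ) ≠ 0 := by exact_mod_cast hc
  calc P.real {a | 2 * √(c * (n * log n)) ≤ ∑ i ∈ Finset.range n, X i a}
    _ ≤ exp (-(2 * √(c * (n * log n))) ^ 2 / (2 * n * c)) :=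
      HasSubgaussianMGF.measure_sum_range_ge_le_of_iIndepFun hindep (fun i _ ↦ hX i)
        (by positivity)
    _ = exp (-log ((n : ℝ) ^ 2)) := by
      rw [mul_pow, sq_sqrt (by positivity), log_pow, Nat.cast_ofNat]
      field_simp
    _ = 1 / (n : ℝ) ^ 2 := by rw [exp_neg, exp_log (by positivity), one_div]

lemma ae_eventually_sum_lt_two_mul_sqrt (hindep : iIndepFun X P)
    (hX : ∀ i, HasSubgaussianMGF (X i) c P) (hc : c ≠ 0) :
    ∀ᵐ a ∂P, ∀ᶠ n : ℕ in atTop,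
      ∑ i ∈ Finset.range n, X i a < 2 * √(c * (n * log n)) := by
  have := hindep.isProbabilityMeasure
  have hsummable : Summable fun n : ℕ ↦
      P.real {a | 2 * √(c * (n * log n)) ≤ ∑ i ∈ Finset.range n, X i a} :=
    (summable_one_div_nat_pow.2 one_lt_two).of_norm_bounded_eventually_nat <| by
      filter_upwards [eventually_ne_atTop 0] with n hn
      rw [norm_of_nonneg measureReal_nonneg]
      exact measureReal_two_mul_sqrt_le_sum_le hindep hX hc hn
  have htsum := hsummable.tsum_ofReal_ne_top
  simp only [ofReal_measureReal (measure_ne_top P _)] at htsum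
  filter_upwards [ae_eventually_notMem htsum] with a ha
  exact ha.mono fun n hn ↦ not_le.1 hn

lemma ae_sum_isBigO_sqrt (hindep : iIndepFun X P)
    (hX : ∀ i, HasSubgaussianMGF (X i) c P) (hc : c ≠ 0) :
    ∀ᵐ a ∂P, (fun n ↦ ∑ i ∈ Finset.range n, X i a) =O[atTop] fun n : ℕ ↦ √(n * log n) := by
  have hneg : iIndepFun (fun i ↦ -X i) P := hindep.comp (fun _ ↦ Neg.neg) fun _ ↦ measurable_neg
  filter_upwards [ae_eventually_sum_lt_two_mul_sqrt hindep hX hc,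
    ae_eventually_sum_lt_two_mul_sqrt hneg (fun i ↦ (hX i).neg) hc] with a hupper hlower
  refine .of_bound (2 * √c) ?_
  filter_upwards [hupper, hlower] with n hupper hlower
  simp only [Pi.neg_apply, Finset.sum_neg_distrib] at hlower
  rw [norm_of_nonneg (sqrt_nonneg _), mul_assoc, ← sqrt_mul c.coe_nonneg]
  exact abs_le.2 ⟨by linarith, hupper.le⟩

end Subgaussian

lemma ae_tendsto_rpow_mul_integral_empiricalMeasure_sub [MeasurableSingletonClass E]
    {ν : Measure E} [IsProbabilityMeasure ν] {φ : E → ℝ} (hφ : Measurable φ) {C : ℝ}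
    (hC : ∀ y, |φ y| ≤ C) :
    ∀ᵐ x ∂Measure.infinitePi fun _ : ℕ ↦ ν, ∀ γ : ℝ, γ < 1 / 2 →
      Tendsto (fun n : ℕ ↦
        (n : ℝ) ^ γ * (∫ y, φ y ∂empiricalMeasure x n - ∫ y, φ y ∂ν)) atTop (𝓝 0) := by
  set P := Measure.infinitePi fun _ : ℕ ↦ ν
  set X : ℕ → (ℕ → E) → ℝ := fun i x ↦ φ (x i) - ∫ y, φ y ∂ν
  have hindep : iIndepFun X P := iIndepFun_infinitePi fun _ ↦ hφ.sub_const _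
  -- The variance proxy has to be positive, hence `max C 1` instead of `C`.
  have hsub : ∀ i, HasSubgaussianMGF (X i) ((‖max C 1 - -max C 1‖₊ / 2) ^ 2) P := fun i ↦ by
    have hmean : ∫ x, φ (x i) ∂P = ∫ y, φ y ∂ν := by
      rw [← Measure.infinitePi_map_eval (fun _ : ℕ ↦ ν) i, integral_map
        (measurable_pi_apply i).aemeasurable hφ.aestronglyMeasurable]
    have hmem : ∀ x : ℕ → E, φ (x i) ∈ Set.Icc (-max C 1) (max C 1) :=
      fun x ↦ abs_le.1 ((hC _).trans (le_max_left _ _))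
    have := hasSubgaussianMGF_of_mem_Icc (hφ.comp (measurable_pi_apply i)).aemeasurable
      (ae_of_all P hmem)
    simpa only [Function.comp_apply, hmean] using this
  have hpos : (‖max C 1 - -max C 1‖₊ / 2) ^ 2 ≠ 0 := by
    have : 0 < max C 1 := one_pos.trans_le (le_max_right _ _)
    simpa using by linarith
  filter_upwards [ae_sum_isBigO_sqrt hindep hsub hpos] with x hx γ hγ
  refine (tendsto_rpow_mul_inv_mul_of_isBigO_sqrt hx hγ).congr' ?_
  filter_upwards [eventually_ne_atTop 0] with n hn
  have hn' : (n : ℝ) ≠ 0 := by exact_mod_cast hn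
  rw [integral_empiricalMeasure, Finset.sum_sub_distrib, Finset.sum_const, Finset.card_range,
    nsmul_eq_mul, mul_sub, inv_mul_cancel_left₀ hn']

end LawOfLargeNumbers

section RandomField

lemma IsProductMeasure.eq_infinitePi {ν : Measure ℝ} [IsProbabilityMeasure ν] {μ : Measure (ℕ → ℝ)}
    (hμ : IsProductMeasure ν μ) : μ = Measure.infinitePi fun _ ↦ ν := by
  classical
  refine Measure.eq_infinitePi _ fun s t ht ↦ ?_
  obtain ⟨n, hn⟩ := s.exists_nat_subset_range
  set t' : ℕ → Set ℝ := fun i ↦ if i ∈ s then t i else Set.univ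
  have ht'_meas : ∀ i, MeasurableSet (t' i) := fun i ↦ by
    by_cases hi : i ∈ s <;> simp [t', hi, ht]
  have hcylinder : Set.pi (↑s) t = (fun h (i : Fin n) ↦ h (i : ℕ)) ⁻¹'
      Set.pi Set.univ fun i : Fin n ↦ t' i := by
    ext h
    refine ⟨fun hh i _ ↦ ?_, fun hh i hi ↦ ?_⟩
    · by_cases hi : (i : ℕ) ∈ s
      · simpa [t', hi] using hh i hi
      · simp [t', hi]
    · simpa [t', Finset.mem_coe.1 hi] using hh ⟨i, Finset.mem_range.1 (hn hi)⟩ (Set.mem_univ _)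
  rw [hcylinder, ← Measure.map_apply (by fun_prop)
      (MeasurableSet.univ_pi fun i : Fin n ↦ ht'_meas i), hμ n, Measure.pi_pi,
    Fin.prod_univ_eq_prod_range (fun i ↦ ν (t' i)) n,
    ← Finset.prod_subset hn fun i _ hi ↦ by simp [t', hi]]
  exact Finset.prod_congr rfl fun i hi ↦ by simp [t', hi]

variable {ν : Measure ℝ} [IsProbabilityMeasure ν] {μ : Measure (ℕ → ℝ)}

lemma ae_tendsto_rpow_mul_iteratedDeriv_Gn_sub (β : ℝ) (hν : Integrable (fun y ↦ y) ν)
    (hμ : IsProductMeasure ν μ) (m : ℝ) :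
    ∀ᵐ h ∂μ, ∀ j : ℕ, 1 ≤ j → ∀ γ : ℝ, γ < 1 / 2 →
      Tendsto (fun n : ℕ ↦ (n : ℝ) ^ γ *
        (iteratedDeriv j (Gn β h n) m - iteratedDeriv j (G β ν) m)) atTop (𝓝 0) := by
  rw [hμ.eq_infinitePi, ae_all_iff]
  intro j
  rcases j.eq_zero_or_pos with rfl | hj
  · exact ae_of_all _ fun _ hj ↦ absurd hj (by norm_num)
  obtain ⟨C, hC⟩ := exists_abs_iteratedDeriv_logCosh_le β (j - 1)
  rw [Nat.sub_add_cancel hj] at hC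
  have hmeas : Measurable fun y ↦ iteratedDeriv j (logCosh β) (m + y) :=
    ((contDiff_logCosh β).continuous_iteratedDeriv j le_rfl).measurable.comp (by fun_prop)
  filter_upwards [ae_tendsto_rpow_mul_integral_empiricalMeasure_sub hmeas fun _ ↦ hC _]
    with h hh _ γ hγ
  have hneg := (hh γ hγ).neg
  rw [neg_zero] at hneg
  refine hneg.congr fun n ↦ ?_
  rw [Gn_eq_G_empiricalMeasure, iteratedDeriv_G β (integrable_empiricalMeasure _ h n),
    iteratedDeriv_G β hν]
  ring

lemma ae_tendsto_rpow_pow_mul_iteratedDeriv_Gn (β : ℝ) (hν : Integrable (fun y ↦ y) ν)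
    (hμ : IsProductMeasure ν μ) {m : ℝ} {p : ℕ}
    (hm : ∀ j, 1 ≤ j → j < p → iteratedDeriv j (G β ν) m = 0) :
    ∀ᵐ h ∂μ, ∀ a : ℝ, 0 ≤ a → (p - 1) * a < 1 / 2 → ∀ j ∈ Finset.Icc 1 p,
      Tendsto (fun n : ℕ ↦ ((n : ℝ) ^ a) ^ (p - j) * iteratedDeriv j (Gn β h n) m) atTop
        (𝓝 (iteratedDeriv j (G β ν) m)) := by
  filter_upwards [ae_tendsto_rpow_mul_iteratedDeriv_Gn_sub β hν hμ m] with h hh a ha hpa j hj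
  obtain ⟨hj₁, hjp⟩ := Finset.mem_Icc.1 hj
  have hexp : a * (p - j : ℕ) < 1 / 2 := by
    rw [mul_comm, Nat.cast_sub hjp]
    refine lt_of_le_of_lt ?_ hpa
    gcongr
    exact_mod_cast hj₁
  have hfixed : ∀ r : ℝ, r ^ (p - j) * iteratedDeriv j (G β ν) m = iteratedDeriv j (G β ν) m := by
    rcases hjp.eq_or_lt with rfl | hlt
    · simp
    · simp [hm j hj₁ hlt]
  have hsum := (hh j hj₁ _ hexp).add_const (iteratedDeriv j (G β ν) m)
  rw [zero_add] at hsum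
  refine hsum.congr fun n ↦ ?_
  rw [rpow_mul n.cast_nonneg, rpow_natCast, mul_sub, hfixed, sub_add_cancel]

end RandomField

theorem rescaled_increments_convergence_general (β : ℝ) {ν : Measure ℝ} [IsProbabilityMeasure ν]
    (hν : Integrable (fun y ↦ y) ν) {μ : Measure (ℕ → ℝ)} (hμ : IsProductMeasure ν μ)
    {m : ℝ} {p : ℕ} (hp : p ≠ 0) (hm : ∀ j, 1 ≤ j → j < p → iteratedDeriv j (G β ν) m = 0) :
    ∀ᵐ h ∂μ, ∀ α : ℝ, (p - 1) * (1 - α) < 1 / 2 → α < 1 →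
      ∀ K : Set ℝ, Bornology.IsBounded K →
        TendstoUniformlyOn (fun (n : ℕ) s ↦ (n : ℝ) ^ (p * (1 - α)) *
            (Gn β h n (m + s * (n : ℝ) ^ (α - 1)) - Gn β h n m))
          (fun s ↦ iteratedDeriv p (G β ν) m * s ^ p / p.factorial) atTop K := by
  obtain ⟨C, hC⟩ := exists_abs_iteratedDeriv_G_le β (j := p + 1) (by lia)
  filter_upwards [ae_tendsto_rpow_pow_mul_iteratedDeriv_Gn β hν hμ hm] with h hh α hpα hα K hK
  have hsmooth : ∀ n, ContDiff ℝ (p + 1) (Gn β h n) := fun n ↦ by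
    rw [Gn_eq_G_empiricalMeasure]
    exact (contDiff_G β (integrable_empiricalMeasure _ h n)).of_le (by exact_mod_cast le_top)
  have hbound : ∀ n y, |iteratedDeriv (p + 1) (Gn β h n) y| ≤ C := fun n y ↦ by
    rw [Gn_eq_G_empiricalMeasure]
    exact hC _ (integrable_empiricalMeasure _ h n) y
  have hscale : Tendsto (fun n : ℕ ↦ (n : ℝ) ^ (1 - α)) atTop atTop :=
    (tendsto_rpow_atTop (sub_pos.2 hα)).comp tendsto_natCast_atTop_atTop
  have hlimit : ∀ s : ℝ, ∑ j ∈ Finset.Icc 1 p, iteratedDeriv j (G β ν) m * s ^ j / j.factorial =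
      iteratedDeriv p (G β ν) m * s ^ p / p.factorial := fun s ↦
    Finset.sum_eq_single_of_mem p (Finset.mem_Icc.2 ⟨Nat.one_le_iff_ne_zero.2 hp, le_rfl⟩)
      fun j hj hjp ↦ by
        have hj' := Finset.mem_Icc.1 hj
        simp [hm j hj'.1 (hj'.2.lt_of_ne hjp)]
  have hrescaled := tendstoUniformlyOn_rescaled_increments hsmooth hbound hscale
    (hh (1 - α) (sub_pos.2 hα).le hpα) hK
  simp only [hlimit] at hrescaled
  refine hrescaled.congr (Eventually.of_forall fun n s _ ↦ ?_)
  have hpow : ((n : ℝ) ^ (1 - α)) ^ p = (n : ℝ) ^ (p * (1 - α)) := by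
    rw [mul_comm, rpow_mul n.cast_nonneg, rpow_natCast]
  have hinv : s / (n : ℝ) ^ (1 - α) = s * (n : ℝ) ^ (α - 1) := by
    rw [← neg_sub 1 α, rpow_neg n.cast_nonneg, div_eq_mul_inv]
  simp only [hpow, hinv]

/-- Uniform convergence of the rescaled increments of `G_n^h`
(Lemma 5.4 (i) of the paper). -/
theorem rescaled_increments_convergence
    (β : ℝ) (hβ : 0 < β) (ν : Measure ℝ) [IsProbabilityMeasure ν]
    (hmom : Integrable (fun x : ℝ => x ^ 2) ν)
    (μ : Measure (ℕ → ℝ)) [IsProbabilityMeasure μ] (hμ : IsProductMeasure ν μ)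
    (m : ℝ) (k : ℕ) (l : ℝ) (hmin : IsMinOfType β ν m k l) :
    ∀ᵐ h ∂μ, ∀ α : ℝ, 1 - 1 / (2 * (2 * (k : ℝ) - 1)) < α → α < 1 →
      (∀ s : ℝ, Tendsto (fun n : ℕ => (n : ℝ) ^ (2 * (k : ℝ) * (1 - α)) *
          (Gn β h n (m + s * (n : ℝ) ^ (α - 1)) - Gn β h n m)) atTop
        (𝓝 (l * s ^ (2 * k) / Nat.factorial (2 * k)))) ∧
      (∀ K : Set ℝ, IsCompact K →
        TendstoUniformlyOn (fun n s => ((n : ℕ) : ℝ) ^ (2 * (k : ℝ) * (1 - α)) *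
            (Gn β h n (m + s * (n : ℝ) ^ (α - 1)) - Gn β h n m))
          (fun s => l * s ^ (2 * k) / Nat.factorial (2 * k)) atTop K) := by
  obtain ⟨hk, -, hzero, rfl⟩ := hmin
  have hν : Integrable (fun y ↦ y) ν :=
    ((memLp_two_iff_integrable_sq aestronglyMeasurable_id).2 hmom).integrable one_le_two
  filter_upwards [rescaled_increments_convergence_general β hν hμ (p := 2 * k) (by lia)
    fun j hj hjk ↦ hzero j hj (by lia)] with h hh α hα hα₁
  have hk' : (1 : ℝ) ≤ k := by exact_mod_cast hk
  have hexp : ((2 * k : ℕ) - 1 : ℝ) * (1 - α) < 1 / 2 := by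
    have := (lt_div_iff₀ (by linarith)).1 (sub_lt_comm.1 hα)
    push_cast
    linarith
  have hunif := hh α hexp hα₁
  push_cast at hunif
  exact ⟨fun s ↦ (hunif {s} Bornology.isBounded_singleton).tendsto_at rfl,
    fun K hK ↦ hunif K hK.isBounded⟩
end
end

section
/- Suppose ν has a finite absolute first moment and that ν is pure and centered at m. Then for μ-almost every realization h, for every k ≥ 1, every α with 1 − 1/(2(2k−1)) < α < 1, and every a > 0: (1/n^{1−2k(1−α)}) ln ∫_{ {s : |s| > a n^{1−α}} } exp( −n ( G_n^h(m + s n^{α−1}) − G_n^h(m) ) ) ds → −∞ as n → ∞. -/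
open MeasureTheory ProbabilityTheory Real Filter Topology
open scoped ENNReal NNReal

noncomputable section

/-! Since `log ∘ cosh` is 1-Lipschitz, the increments of `Gn β h n` differ from those of
`β / 2 * x ^ 2` by at most `|β| * |x - y|`, uniformly in `h` and `n`. Hence the functions `Gn β h n`
are equicontinuous: the strong law, applied at the rational points, gives almost surely
`Gn β h n → G β ν` at every point, and the convergence is uniform on compact sets. The same bound
forces quadratic growth far from `m`, while on compact sets avoiding `m` the uniform limit stays
above its minimum `G β ν m`. So almost surely, for large `n`,
`c * (x - m) ^ 2 ≤ Gn β h n x - Gn β h n m` as soon as `a ≤ |x - m|`. A Gaussian comparison makes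
the integral smaller than `exp (-δ * n)`, which beats every speed `n ^ γ` with `γ < 1`. -/

open scoped BigOperators

section UniformConvergence

variable {ι X : Type*} [TopologicalSpace X] {l : Filter ι} {K : Set X}

lemma tendstoUniformlyOn_of_equicontinuous {α : Type*} [UniformSpace α] {F : ι → X → α} {f : X → α}
    (hF : Equicontinuous F) (hf : ∀ x, Tendsto (F · x) l (𝓝 (f x))) (hK : IsCompact K) :
    TendstoUniformlyOn F f l K := by
  have h := (EquicontinuousOn.tendsto_uniformOnFun_iff_pi' (𝔖 := {K}) (by simpa using hK)
    (fun S _ => hF.equicontinuousOn S) l f).2 (tendsto_pi_nhds.2 fun x => hf x)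
  exact UniformOnFun.tendsto_iff_tendstoUniformlyOn.1 h K rfl

lemma exists_pos_eventually_le_sub_of_tendstoUniformlyOn {F : ι → X → ℝ} {f : X → ℝ} {m : X}
    (hF : TendstoUniformlyOn F f l K) (hFm : Tendsto (F · m) l (𝓝 (f m))) (hK : IsCompact K)
    (hf : ContinuousOn f K) (hmin : ∀ x ∈ K, f m < f x) :
    ∃ δ > 0, ∀ᶠ n in l, ∀ x ∈ K, δ ≤ F n x - F n m := by
  obtain ⟨b, hmb, hb⟩ := hK.exists_forall_le' hf hmin
  have hε : 0 < (b - f m) / 3 := by linarith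
  refine ⟨(b - f m) / 3, hε, ?_⟩
  filter_upwards [Metric.tendstoUniformlyOn_iff.1 hF _ hε, Metric.tendsto_nhds.1 hFm _ hε]
    with n hn hnm x hx
  have hnx := hn x hx
  rw [Real.dist_eq, abs_lt] at hnx hnm
  linarith [hb x hx]

end UniformConvergence

section Averages

variable {X : Type*} [PseudoMetricSpace X] {K : ℝ≥0}

lemma lipschitzWith_expect {ι : Type*} {s : Finset ι} {f : ι → X → ℝ}
    (hf : ∀ i ∈ s, LipschitzWith K (f i)) : LipschitzWith K fun x => 𝔼 i ∈ s, f i x := by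
  refine LipschitzWith.of_dist_le_mul fun x y => ?_
  rcases s.eq_empty_or_nonempty with rfl | hs
  · simpa using by positivity
  · calc |𝔼 i ∈ s, f i x - 𝔼 i ∈ s, f i y|
        = |𝔼 i ∈ s, (f i x - f i y)| := by rw [Finset.expect_sub_distrib]
      _ ≤ 𝔼 i ∈ s, |f i x - f i y| := Finset.abs_expect_le _ _
      _ ≤ K * dist x y := Finset.expect_le hs fun i hi => (hf i hi).dist_le_mul x y

lemma lipschitzWith_integral {Ω E : Type*} [MeasurableSpace Ω] {P : Measure Ω}
    [IsProbabilityMeasure P] [NormedAddCommGroup E] [NormedSpace ℝ E] {f : X → Ω → E}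
    (hint : ∀ x, Integrable (f x) P) (hf : ∀ᵐ ω ∂P, LipschitzWith K (f · ω)) :
    LipschitzWith K fun x => ∫ ω, f x ω ∂P := by
  refine LipschitzWith.of_dist_le_mul fun x y => ?_
  rw [dist_eq_norm, ← integral_sub (hint x) (hint y)]
  have h : ∀ᵐ ω ∂P, ‖f x ω - f y ω‖ ≤ K * dist x y :=
    hf.mono fun ω hω => by simpa only [dist_eq_norm] using hω.dist_le_mul x y
  simpa using norm_integral_le_of_norm_le_const h

end Averages

section LogCosh

lemma lipschitzWith_log_cosh : LipschitzWith 1 fun x => log (cosh x) := by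
  refine lipschitzWith_of_nnnorm_deriv_le
    (differentiable_cosh.log fun x => (cosh_pos x).ne') fun x => ?_
  rw [deriv.log differentiable_cosh.differentiableAt (cosh_pos x).ne', Real.deriv_cosh,
    ← tanh_eq_sinh_div_cosh]
  exact (abs_tanh_lt_one x).le

lemma lipschitzWith_log_cosh_mul_add (β t : ℝ) :
    LipschitzWith (nnabs β) fun x => log (cosh (β * (x + t))) := by
  refine LipschitzWith.of_dist_le_mul fun x y => ?_
  calc dist (log (cosh (β * (x + t)))) (log (cosh (β * (y + t))))
      ≤ dist (β * (x + t)) (β * (y + t)) := by simpa using lipschitzWith_log_cosh.dist_le_mul _ _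
    _ = nnabs β * dist x y := by
      rw [Real.dist_eq, Real.dist_eq, coe_nnabs, ← abs_mul]
      ring_nf

lemma continuous_log_cosh_mul_add (β x : ℝ) : Continuous fun t => log (cosh (β * (x + t))) :=
  lipschitzWith_log_cosh.continuous.comp (by fun_prop)

variable {ν : Measure ℝ}

lemma integrable_log_cosh_mul_add [IsFiniteMeasure ν] (hmom : Integrable (fun x : ℝ => |x|) ν)
    (β x : ℝ) : Integrable (fun t => log (cosh (β * (x + t)))) ν := by
  have hid : Integrable (fun t : ℝ => t) ν :=
    (integrable_norm_iff aestronglyMeasurable_id).1 hmom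
  have hlin : MemLp (fun t => β * (x + t)) 1 ν :=
    memLp_one_iff_integrable.2 (((integrable_const x).add hid).const_mul β)
  exact memLp_one_iff_integrable.1 (lipschitzWith_log_cosh.comp_memLp (by simp) hlin)

lemma continuous_G [IsProbabilityMeasure ν] (hmom : Integrable (fun x : ℝ => |x|) ν) (β : ℝ) :
    Continuous (G β ν) := by
  have hint : Continuous fun x => ∫ t, log (cosh (β * (x + t))) ∂ν :=
    (lipschitzWith_integral (integrable_log_cosh_mul_add hmom β)
      (.of_forall (lipschitzWith_log_cosh_mul_add β))).continuous
  unfold G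
  fun_prop

end LogCosh

section FiniteVolume

lemma Gn_eq_sub_expect (β : ℝ) (h : ℕ → ℝ) (n : ℕ) (x : ℝ) :
    Gn β h n x = β / 2 * x ^ 2 - 𝔼 i ∈ Finset.range n, log (cosh (β * (x + h i))) := by
  rw [Gn, Finset.expect_eq_sum_div_card, Finset.card_range, Finset.sum_range, one_div_mul_eq_div]

lemma abs_Gn_sub_Gn_sub_le (β : ℝ) (h : ℕ → ℝ) (n : ℕ) (x y : ℝ) :
    |Gn β h n x - Gn β h n y - β / 2 * (x ^ 2 - y ^ 2)| ≤ |β| * |x - y| := by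
  have hlip := (lipschitzWith_expect (s := Finset.range n) fun i _ =>
    lipschitzWith_log_cosh_mul_add β (h i)).dist_le_mul y x
  rw [Real.dist_eq, Real.dist_eq, coe_nnabs, abs_sub_comm y x] at hlip
  rw [Gn_eq_sub_expect, Gn_eq_sub_expect]
  convert hlip using 2
  ring

lemma equicontinuous_Gn (β : ℝ) (h : ℕ → ℝ) : Equicontinuous (Gn β h) := by
  intro x₀
  have hmod : Tendsto (fun x : ℝ => |β| * |x₀ - x| + |β / 2 * (x₀ ^ 2 - x ^ 2)|) (𝓝 x₀) (𝓝 0) :=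
    Continuous.tendsto' (by fun_prop) _ _ (by simp)
  refine Metric.equicontinuousAt_of_continuity_modulus _ hmod _ (.of_forall fun x n => ?_)
  have hincr := abs_Gn_sub_Gn_sub_le β h n x₀ x
  rw [Real.dist_eq]
  linarith [abs_sub_abs_le_abs_sub (Gn β h n x₀ - Gn β h n x) (β / 2 * (x₀ ^ 2 - x ^ 2))]

lemma mul_sq_le_Gn_sub_of_le_abs_sub {β : ℝ} (hβ : 0 ≤ β) (h : ℕ → ℝ) (n : ℕ) {x m : ℝ}
    (hx : 4 * (|m| + 1) ≤ |x - m|) : β / 4 * (x - m) ^ 2 ≤ Gn β h n x - Gn β h n m := by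
  have hincr := (abs_le.1 (abs_Gn_sub_Gn_sub_le β h n x m)).1
  rw [abs_of_nonneg hβ] at hincr
  have hcross : -(|m| * |x - m|) ≤ m * (x - m) := by
    rw [← abs_mul]
    exact neg_abs_le _
  have hsq : 4 * (|m| + 1) * |x - m| ≤ (x - m) ^ 2 := by
    rw [← sq_abs, sq]
    gcongr
  have hquad : |x - m| ≤ (x - m) ^ 2 / 4 + m * (x - m) := by linarith
  linarith [mul_le_mul_of_nonneg_left hquad hβ]

lemma exists_pos_eventually_mul_sq_le_Gn_sub {β : ℝ} (hβ : 0 < β) {ν : Measure ℝ} {h : ℕ → ℝ}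
    (hlim : ∀ x, Tendsto (Gn β h · x) atTop (𝓝 (G β ν x))) {m : ℝ}
    (hpure : ∀ x, x ≠ m → G β ν m < G β ν x) {a : ℝ} (ha : 0 < a) :
    ∃ c > 0, ∀ᶠ n in atTop, ∀ x, a ≤ |x - m| → c * (x - m) ^ 2 ≤ Gn β h n x - Gn β h n m := by
  set R := 4 * (|m| + 1)
  have hRpos : 0 < R := by positivity
  have hKcompact : IsCompact (Metric.closedBall m R ∩ {x | a ≤ |x - m|}) :=
    (isCompact_closedBall m R).inter_right (isClosed_le (by fun_prop) (by fun_prop))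
  have hGcont : Continuous (G β ν) :=
    (tendsto_pi_nhds.2 hlim).continuous_of_equicontinuous (equicontinuous_Gn β h)
  have hKmin : ∀ x ∈ Metric.closedBall m R ∩ {x | a ≤ |x - m|}, G β ν m < G β ν x := by
    rintro x ⟨-, hx⟩
    exact hpure x fun hxm => ha.not_ge (by simpa [hxm] using hx)
  obtain ⟨δ, hδ, hgap⟩ := exists_pos_eventually_le_sub_of_tendstoUniformlyOn
    (tendstoUniformlyOn_of_equicontinuous (equicontinuous_Gn β h) hlim hKcompact)
    (hlim m) hKcompact hGcont.continuousOn hKmin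
  refine ⟨min (δ / R ^ 2) (β / 4), by positivity, ?_⟩
  filter_upwards [hgap] with n hn x hx
  rcases le_total |x - m| R with hnear | hfar
  · calc min (δ / R ^ 2) (β / 4) * (x - m) ^ 2
        ≤ δ / R ^ 2 * R ^ 2 := by
          have hsq : (x - m) ^ 2 ≤ R ^ 2 := sq_le_sq.2 (by rwa [abs_of_pos hRpos])
          gcongr
          exact min_le_left _ _
      _ = δ := by field_simp
      _ ≤ Gn β h n x - Gn β h n m := hn x ⟨hnear, hx⟩
  · calc min (δ / R ^ 2) (β / 4) * (x - m) ^ 2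
        ≤ β / 4 * (x - m) ^ 2 := by
          gcongr
          exact min_le_right _ _
      _ ≤ Gn β h n x - Gn β h n m := mul_sq_le_Gn_sub_of_le_abs_sub hβ.le h n hfar

end FiniteVolume

section StrongLaw

variable {Ω : Type*} [MeasurableSpace Ω] {P : Measure Ω} {X : ℕ → Ω → ℝ} {ν : Measure ℝ}

lemma ae_tendsto_Gn [IsFiniteMeasure ν] (hmom : Integrable (fun x : ℝ => |x|) ν)
    (hlaw : ∀ i, HasLaw (X i) ν P) (hindep : Pairwise fun i j => IndepFun (X i) (X j) P)
    (β x : ℝ) : ∀ᵐ ω ∂P, Tendsto (Gn β (X · ω) · x) atTop (𝓝 (G β ν x)) := by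
  have hcont := continuous_log_cosh_mul_add β x
  have hint : Integrable (fun ω => log (cosh (β * (x + X 0 ω)))) P := by
    have hmap := integrable_log_cosh_mul_add hmom β x
    rw [← (hlaw 0).map_eq] at hmap
    exact hmap.comp_aemeasurable (hlaw 0).aemeasurable
  have hident (i : ℕ) : IdentDistrib (X i) (X 0) P P :=
    ⟨(hlaw i).aemeasurable, (hlaw 0).aemeasurable, by rw [(hlaw i).map_eq, (hlaw 0).map_eq]⟩
  have hmean : ∫ ω, log (cosh (β * (x + X 0 ω))) ∂P = ∫ t, log (cosh (β * (x + t))) ∂ν :=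
    (hlaw 0).integral_comp hcont.aestronglyMeasurable
  filter_upwards [strong_law_ae_real (fun i ω => log (cosh (β * (x + X i ω)))) hint
    (fun i j hij => (hindep hij).comp hcont.measurable hcont.measurable)
    (fun i => (hident i).comp hcont.measurable)] with ω hω
  rw [hmean] at hω
  simp only [Gn_eq_sub_expect, G, Finset.expect_eq_sum_div_card, Finset.card_range]
  exact hω.const_sub _

lemma ae_forall_tendsto_Gn [IsProbabilityMeasure ν] (hmom : Integrable (fun x : ℝ => |x|) ν)
    (hlaw : ∀ i, HasLaw (X i) ν P) (hindep : Pairwise fun i j => IndepFun (X i) (X j) P) (β : ℝ) :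
    ∀ᵐ ω ∂P, ∀ x, Tendsto (Gn β (X · ω) · x) atTop (𝓝 (G β ν x)) := by
  filter_upwards [ae_all_iff.2 fun q : ℚ => ae_tendsto_Gn hmom hlaw hindep β q] with ω hω x
  have hclosed := (equicontinuous_Gn β (X · ω)).isClosed_setOfPred_tendsto (l := atTop)
    (continuous_G hmom β)
  exact hclosed.closure_subset_iff.2 (Set.range_subset_iff.2 hω) (Rat.denseRange_cast x)

end StrongLaw

namespace IsProductMeasure

variable {ν : Measure ℝ} [IsProbabilityMeasure ν] {μ : Measure (ℕ → ℝ)}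

lemma hasLaw_eval (hμ : IsProductMeasure ν μ) (i : ℕ) : HasLaw (fun h : ℕ → ℝ => h i) ν μ :=
  (measurePreserving_eval (fun _ : Fin (i + 1) => ν) (Fin.last i)).fun_comp_hasLaw
    ⟨(by fun_prop : Measurable _).aemeasurable, hμ (i + 1)⟩

lemma pairwise_indepFun_eval (hμ : IsProductMeasure ν μ) :
    Pairwise fun i j => IndepFun (fun h : ℕ → ℝ => h i) (fun h => h j) μ := by
  intro i j hij
  have := (hμ.hasLaw_eval 0).isProbabilityMeasure
  have hindep : iIndepFun (fun (i : Fin (max i j + 1)) (h : ℕ → ℝ) => h i) μ :=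
    (iIndepFun_iff_hasLaw_pi_pi fun i : Fin (max i j + 1) => hμ.hasLaw_eval i).2
      ⟨(by fun_prop : Measurable _).aemeasurable, hμ _⟩
  exact hindep.indepFun (i := ⟨i, by omega⟩) (j := ⟨j, by omega⟩) (by simpa using hij)

end IsProductMeasure

section Laplace

lemma setIntegral_abs_gt_comp_mul_inv {E : Type*} [NormedAddCommGroup E] [NormedSpace ℝ E]
    (f : ℝ → E) (a : ℝ) {r : ℝ} (hr : 0 < r) :
    ∫ s in {s | a * r < |s|}, f (s * r⁻¹) = r • ∫ y in {y | a < |y|}, f y := by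
  have hset (s : ℝ) : a * r < |s| ↔ a < |r⁻¹ * s| := by
    rw [abs_mul, abs_of_pos (inv_pos.2 hr), inv_mul_eq_div, lt_div_iff₀ hr]
  have hmeas (b : ℝ) : MeasurableSet {y : ℝ | b < |y|} :=
    measurableSet_lt (by fun_prop) (by fun_prop)
  rw [← integral_indicator (hmeas a), ← integral_indicator (hmeas (a * r))]
  calc ∫ s, {s | a * r < |s|}.indicator (fun s => f (s * r⁻¹)) s
      = ∫ s, {y | a < |y|}.indicator f (r⁻¹ * s) := by
        simp only [Set.indicator_apply, Set.mem_ofPred_eq, hset, mul_comm _ r⁻¹]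
    _ = r • ∫ y, {y | a < |y|}.indicator f y := by
        rw [Measure.integral_comp_mul_left, inv_inv, abs_of_pos hr]

lemma setIntegral_exp_neg_mul_le {f : ℝ → ℝ} {a c t : ℝ} (ha : 0 ≤ a) (hc : 0 < c) (ht : 1 ≤ t)
    (hf : ∀ y, a < |y| → c * y ^ 2 ≤ f y) :
    ∫ y in {y | a < |y|}, exp (-t * f y) ≤ exp (-(t - 1) * (c * a ^ 2)) * √(π / c) := by
  have hmeas : MeasurableSet {y : ℝ | a < |y|} := measurableSet_lt (by fun_prop) (by fun_prop)
  have hgauss : Integrable fun y => exp (-(t - 1) * (c * a ^ 2)) * exp (-c * y ^ 2) :=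
    (integrable_exp_neg_mul_sq hc).const_mul _
  have hle : ∀ y ∈ {y : ℝ | a < |y|},
      exp (-t * f y) ≤ exp (-(t - 1) * (c * a ^ 2)) * exp (-c * y ^ 2) := by
    intro y hy
    have hsq : a ^ 2 ≤ y ^ 2 := sq_le_sq.2 (by rw [abs_of_nonneg ha]; exact hy.le)
    rw [← exp_add, exp_le_exp]
    calc -t * f y ≤ -t * (c * y ^ 2) := mul_le_mul_of_nonpos_left (hf y hy) (by linarith)
      _ = -(t - 1) * (c * y ^ 2) + -c * y ^ 2 := by ring
      _ ≤ -(t - 1) * (c * a ^ 2) + -c * y ^ 2 := by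
        gcongr ?_ + _
        exact mul_le_mul_of_nonpos_left (by gcongr) (by linarith)
  calc ∫ y in {y | a < |y|}, exp (-t * f y)
      ≤ ∫ y in {y | a < |y|}, exp (-(t - 1) * (c * a ^ 2)) * exp (-c * y ^ 2) :=
        integral_mono_of_nonneg (.of_forall fun _ => (exp_pos _).le) hgauss.integrableOn
          ((ae_restrict_mem hmeas).mono hle)
    _ ≤ ∫ y, exp (-(t - 1) * (c * a ^ 2)) * exp (-c * y ^ 2) :=
        setIntegral_le_integral hgauss (.of_forall fun _ => by positivity)
    _ = exp (-(t - 1) * (c * a ^ 2)) * √(π / c) := by rw [integral_const_mul, integral_gaussian]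

lemma eventually_rpow_mul_exp_le {d : ℝ} (hd : 0 < d) (p C : ℝ) :
    ∀ᶠ t : ℝ in atTop, t ^ p * (exp (-(t - 1) * d) * C) ≤ exp (-(d / 2) * t) := by
  have hlittle := ((isLittleO_rpow_exp_pos_mul_atTop p (half_pos hd)).const_mul_left
    (exp d * C)).bound one_pos
  filter_upwards [hlittle] with t ht
  rw [one_mul, norm_of_nonneg (exp_pos _).le] at ht
  calc t ^ p * (exp (-(t - 1) * d) * C)
      = exp (-d * t) * (exp d * C * t ^ p) := by
        rw [show -(t - 1) * d = -d * t + d by ring, exp_add]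
        ring
    _ ≤ exp (-d * t) * exp (d / 2 * t) := by
        gcongr
        exact (le_norm_self _).trans ht
    _ = exp (-(d / 2) * t) := by
        rw [← exp_add]
        ring_nf

lemma exists_pos_eventually_setIntegral_le_exp {f : ℕ → ℝ → ℝ} {a c : ℝ} (ha : 0 < a) (hc : 0 < c)
    (hf : ∀ᶠ n in atTop, ∀ y, a < |y| → c * y ^ 2 ≤ f n y) (p : ℝ) :
    ∃ δ > 0, ∀ᶠ n : ℕ in atTop,
      ∫ s in {s | a * (n : ℝ) ^ p < |s|}, exp (-n * f n (s * (n : ℝ) ^ (-p))) ≤ exp (-δ * n) := by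
  refine ⟨c * a ^ 2 / 2, by positivity, ?_⟩
  filter_upwards [hf, eventually_ge_atTop 1,
    tendsto_natCast_atTop_atTop.eventually
      (eventually_rpow_mul_exp_le (d := c * a ^ 2) (by positivity) p √(π / c))]
    with n hn hn1 hdecay
  have hn1' : (1 : ℝ) ≤ n := mod_cast hn1
  calc ∫ s in {s | a * (n : ℝ) ^ p < |s|}, exp (-n * f n (s * (n : ℝ) ^ (-p)))
      = (n : ℝ) ^ p * ∫ y in {y | a < |y|}, exp (-n * f n y) := by
        rw [rpow_neg n.cast_nonneg]
        exact setIntegral_abs_gt_comp_mul_inv (fun y => exp (-n * f n y)) a (by positivity)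
    _ ≤ (n : ℝ) ^ p * (exp (-(n - 1) * (c * a ^ 2)) * √(π / c)) := by
        gcongr
        exact setIntegral_exp_neg_mul_le ha.le hc hn1' hn
    _ ≤ exp (-(c * a ^ 2 / 2) * n) := hdecay

end Laplace

section Speed

lemma elog_ofReal_le_of_le_exp {x y : ℝ} (h : x ≤ exp y) : elog (ENNReal.ofReal x) ≤ y := by
  unfold elog
  split_ifs with hzero htop
  · exact bot_le
  · exact absurd htop ENNReal.ofReal_ne_top
  · have hx : 0 < x := by simpa using hzero
    rw [ENNReal.toReal_ofReal hx.le, EReal.coe_le_coe_iff]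
    exact (log_le_iff_le_exp hx).2 h

lemma tendsto_inv_rpow_mul_elog_nhds_bot {I : ℕ → ℝ} {δ γ : ℝ} (hδ : 0 < δ) (hγ : γ < 1)
    (hI : ∀ᶠ n : ℕ in atTop, I n ≤ exp (-δ * n)) :
    Tendsto (fun n : ℕ => ((((n : ℝ) ^ γ)⁻¹ : ℝ) : EReal) * elog (ENNReal.ofReal (I n)))
      atTop (𝓝 ⊥) := by
  have hrate : Tendsto (fun n : ℕ => -δ * (n : ℝ) ^ (1 - γ)) atTop atBot :=
    ((tendsto_rpow_atTop (sub_pos.2 hγ)).comp tendsto_natCast_atTop_atTop).const_mul_atTop_of_neg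
      (neg_lt_zero.2 hδ)
  rw [EReal.tendsto_nhds_bot_iff_real]
  intro x
  filter_upwards [hI, eventually_gt_atTop 0, hrate.eventually_lt_atBot x] with n hn hn0 hnx
  have hn0' : (0 : ℝ) < n := mod_cast hn0
  calc ((((n : ℝ) ^ γ)⁻¹ : ℝ) : EReal) * elog (ENNReal.ofReal (I n))
      ≤ ((((n : ℝ) ^ γ)⁻¹ : ℝ) : EReal) * ((-δ * n : ℝ) : EReal) :=
        mul_le_mul_of_nonneg_left (elog_ofReal_le_of_le_exp hn)
          (EReal.coe_nonneg.2 (by positivity))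
    _ = ((-δ * (n : ℝ) ^ (1 - γ) : ℝ) : EReal) := by
        rw [← EReal.coe_mul, rpow_sub hn0', rpow_one]
        ring_nf
    _ < x := EReal.coe_lt_coe_iff.2 hnx

end Speed

theorem integral_outside_window_general {β : ℝ} (hβ : 0 < β) {ν : Measure ℝ}
    [IsProbabilityMeasure ν] (hmom : Integrable (fun x : ℝ => |x|) ν) {Ω : Type*}
    [MeasurableSpace Ω] {P : Measure Ω} {X : ℕ → Ω → ℝ} (hlaw : ∀ i, HasLaw (X i) ν P)
    (hindep : Pairwise fun i j => IndepFun (X i) (X j) P)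
    {m : ℝ} (hpure : ∀ x : ℝ, x ≠ m → G β ν m < G β ν x) :
    ∀ᵐ ω ∂P, ∀ γ : ℝ, γ < 1 → ∀ α a : ℝ, 0 < a →
      Tendsto (fun n : ℕ => ((((n : ℝ) ^ γ)⁻¹ : ℝ) : EReal) *
          elog (ENNReal.ofReal
            (∫ s in {s : ℝ | a * (n : ℝ) ^ (1 - α) < |s|},
              Real.exp (-(n : ℝ) *
                (Gn β (X · ω) n (m + s * (n : ℝ) ^ (α - 1)) - Gn β (X · ω) n m)))))
        atTop (𝓝 ⊥) := by
  filter_upwards [ae_forall_tendsto_Gn hmom hlaw hindep β] with ω hlim γ hγ α a ha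
  obtain ⟨c, hc, hgrowth⟩ := exists_pos_eventually_mul_sq_le_Gn_sub hβ hlim hpure ha
  have hgrowth' : ∀ᶠ n in atTop, ∀ y, a < |y| →
      c * y ^ 2 ≤ Gn β (X · ω) n (m + y) - Gn β (X · ω) n m := by
    filter_upwards [hgrowth] with n hn y hy
    simpa using hn (m + y) (by simpa using hy.le)
  obtain ⟨δ, hδ, hdecay⟩ := exists_pos_eventually_setIntegral_le_exp ha hc hgrowth' (1 - α)
  rw [neg_sub] at hdecay
  exact tendsto_inv_rpow_mul_elog_nhds_bot hδ hγ hdecay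

/-- The integral outside the moderate window is super-exponentially small
(display (6.8) of the paper). -/
theorem integral_outside_window
    (β : ℝ) (hβ : 0 < β) (ν : Measure ℝ) [IsProbabilityMeasure ν]
    (hmom : Integrable (fun x : ℝ => |x|) ν)
    (μ : Measure (ℕ → ℝ)) [IsProbabilityMeasure μ] (hμ : IsProductMeasure ν μ)
    (m : ℝ) (hpure : ∀ x : ℝ, x ≠ m → G β ν m < G β ν x) :
    ∀ᵐ h ∂μ, ∀ k : ℕ, 1 ≤ k →
      ∀ α : ℝ, 1 - 1 / (2 * (2 * (k : ℝ) - 1)) < α → α < 1 →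
        ∀ a : ℝ, 0 < a →
          Tendsto (fun n : ℕ => ((((n : ℝ) ^ (1 - 2 * (k : ℝ) * (1 - α)))⁻¹ : ℝ) : EReal) *
              elog (ENNReal.ofReal
                (∫ s in {s : ℝ | a * (n : ℝ) ^ (1 - α) < |s|},
                  Real.exp (-(n : ℝ) *
                    (Gn β h n (m + s * (n : ℝ) ^ (α - 1)) - Gn β h n m)))))
            atTop (𝓝 ⊥) := by
  filter_upwards [integral_outside_window_general hβ hmom hμ.hasLaw_eval hμ.pairwise_indepFun_eval
    hpure] with h hh k hk α _ hα a ha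
  exact hh _ (sub_lt_self _ (mul_pos (mul_pos two_pos (Nat.cast_pos.2 hk)) (sub_pos.2 hα))) α a ha
end
end
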